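/- Let $\Omega\subset\mathbb R^2$ be a bounded open connected polygonal domain with Lipschitz boundary $\Gamma$, let $\mathcal T_h$ be a conforming triangulation of $\Omega$ with set of edges $\mathcal E_h$ and set of boundary edges $\mathcal E_h^\partial$ (those contained in $\Gamma$), let $n$ denote the outward unit normal on the boundary of each triangle $T$, let $\tau$ be the unit tangent on $\Gamma$, and put $\eta|_{\partial T}=h_T^{-1}$ with $h_T=\operatorname{diam}T$. Let $k\ge 1$, $\gamma>0$, $f,y_d\in L^2(\Omega)^2$ and $u\in L^2(\Gamma)$ (for instance the optimal control of the tangential Dirichlet boundary control problem for the Stokes system with $\nu=1$). Write $(\cdot,\cdot)_{\mathcal T_h}=\sum_{T}\int_T$, $\langle\cdot,\cdot\rangle_{\partial\mathcal T_h}=\sum_T\int_{\partial T}$, $\langle\cdot,\cdot\rangle_\Gamma=\langle\cdot,\cdot\rangle_{\mathcal E_h^\partial}=\sum_{E\in\mathcal E_h^\partial}\int_E$ for the broken $L^2$ inner products, $\|\cdot\|_{\mathcal T_h}$ and $\|\cdot\|_{\mathcal E_h^\partial}$ for the corresponding norms, and let $\Pi_m^\partial$ be the edgewise (componentwise) $L^2$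 projection onto polynomials of degree at most $m$. Traces from the adjacent triangle are used on boundary edges. Consider the spaces $$\Sigma_h=\{G: G|_T\in P_{k-1}(T)^{2\times2}\ \forall T\},\qquad V_h^0=\{v\in H(\mathrm{div};\Omega): v|_T\in P_k(T)^2\ \forall T,\ v\cdot n|_\Gamma=0\},$$ $$\widehat V_h^0=\{\hat v\in L^2(\mathcal E_h)^2:\hat v|_E\in P_{k-1}(E)^2\ \forall E\in\mathcal E_h,\ \hat v|_\Gamma=0\},\qquad U_h=\{\mu\in L^2(\Gamma):\mu|_E\in P_{k-1}(E)\ \forall E\in\mathcal E_h^\partial\},$$ $$Q_h=\{q\in L^2_0(\Omega): q|_T\in P_{k-1}(T)\ \forall T\},$$ and the bilinear form (with elementwise differential operators) $$\mathscr B(L,y,\hat y,p;G,v,\hat v,q)=(L,G)_{\mathcal T_h}+(y,\nabla\cdot G)_{\mathcal T_h}-\langle\hat y,Gn\rangle_{\partial\mathcal T_h}-(\nabla\cdot L,v)_{\mathcal T_h}+\langle Ln,\hat v\rangle_{\partial\mathcal T_h}-(p,\nabla\cdot v)_{\mathcal T_h}+\langle\eta(\Pi_{k-1}^\partial y-\hat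 y),\Pi_{k-1}^\partial v-\hat v\rangle_{\partial\mathcal T_h}+(\nabla\cdot y,q)_{\mathcal T_h}.$$ Let $X_h=\Sigma_h\times V_h^0\times\widehat V_h^0\times Q_h$. Let $(L_h,y_h,\hat y_h^o,p_h)\in X_h$, $(T_h,z_h,\hat z_h,w_h)\in X_h$ and $u_h\in U_h$ solve the discrete optimality system $$\mathscr B(L_h,y_h,\hat y_h^o,p_h;G,v,\hat v,q)=(f,v)_{\mathcal T_h}+\langle u_h\tau,Gn\rangle_\Gamma+\langle\eta u_h\tau,v\rangle_\Gamma,\qquad \mathscr B(T_h,z_h,\hat z_h,w_h;G,v,\hat v,q)=(y_h-y_d,v)_{\mathcal T_h},$$ $$\langle\gamma u_h\tau-T_hn+\eta\Pi_k^\partial z_h,\mu\tau\rangle_\Gamma=0$$ for all $(G,v,\hat v,q)\in X_h$ and $\mu\in U_h$, and let $(L_h(u),y_h(u),\hat y_h^o(u),p_h(u))\in X_h$ and $(T_h(u),z_h(u),\hat z_h(u),w_h(u))\in X_h$ solve the auxiliary problems $$\mathscr B(L_h(u),y_h(u),\hat y_h^o(u),p_h(u);G,v,\hat v,q)=(f,v)_{\mathcal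 T_h}+\langle\Pi_{k-1}^\partial u\,\tau,Gn\rangle_\Gamma+\langle\eta\,\Pi_{k-1}^\partial u\,\tau,v\rangle_\Gamma,$$ $$\mathscr B(T_h(u),z_h(u),\hat z_h(u),w_h(u);G,v,\hat v,q)=(y_h(u)-y_d,v)_{\mathcal T_h}$$ for all $(G,v,\hat v,q)\in X_h$. Then, with $\zeta_y=y_h(u)-y_h$, $$\gamma\|u-u_h\|_{\mathcal E_h^\partial}^2+\|\zeta_y\|_{\mathcal T_h}^2=\langle\gamma u\tau-T_h(u)n+\eta\Pi_{k-1}^\partial z_h(u),(u-u_h)\tau\rangle_{\mathcal E_h^\partial}-\langle\gamma u_h\tau-T_hn+\eta\Pi_{k-1}^\partial z_h,(u-u_h)\tau\rangle_{\mathcal E_h^\partial}.$$ -/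

import Mathlib

open MeasureTheory
open scoped Measure

noncomputable section

namespace HDGControl

/-- The Euclidean plane. -/
abbrev Pt : Type := EuclideanSpace ℝ (Fin 2)

/-! ### The domain and its triangulations -/

/-- `Ω` has a Lipschitz boundary: near each boundary point, in suitable orthonormal coordinates,
`Ω` is the part of the plane strictly above the graph of a Lipschitz function. -/
def HasLipschitzBoundary (Ω : Set Pt) : Prop :=
  ∀ x ∈ frontier Ω, ∃ (c : Pt ≃ᵃⁱ[ℝ] Pt) (g : ℝ → ℝ) (C : NNReal) (r : ℝ),
    LipschitzWith C g ∧ 0 < r ∧ ∀ p ∈ Metric.ball x r, (p ∈ Ω ↔ g (c p 0) < c p 1)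

/-- An open bounded connected plane set with Lipschitz boundary consisting of finitely many
line segments. -/
structure IsPolygonalDomain (Ω : Set Pt) : Prop where
  isOpen : IsOpen Ω
  isConnected : IsConnected Ω
  isBounded : Bornology.IsBounded Ω
  lipschitz : HasLipschitzBoundary Ω
  polygonal : ∃ S : Finset (Pt × Pt), frontier Ω = ⋃ s ∈ S, segment ℝ s.1 s.2

/-- A (conforming) simplicial triangulation `T_h` of `Ω`: a finite simplicial complex in the plane,
all of whose faces are faces of triangles, and whose underlying space is `closure Ω`.
Simplices are recorded by their finite sets of vertices. -/
structure Triangulation (Ω : Set Pt) where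
  K : Geometry.SimplicialComplex ℝ Pt
  finite : K.faces.Finite
  pure : ∀ s ∈ K.faces, ∃ t ∈ K.faces, s ⊆ t ∧ t.card = 3
  space_eq : K.space = closure Ω

/-- The closed simplex with vertex set `s`. -/
abbrev hull (s : Finset Pt) : Set Pt := convexHull ℝ (s : Set Pt)

/-- Arc length measure on the edge with vertex set `e`. -/
abbrev edgeMeasure (e : Finset Pt) : Measure Pt := (μH[1] : Measure Pt).restrict (hull e)

/-- `n` is the outward unit normal of the triangle `T` on its edge `e`. -/
def IsOutwardNormal (T e : Finset Pt) (n : Pt) : Prop :=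
  ‖n‖ = 1 ∧ (∀ a ∈ e, ∀ b ∈ e, inner ℝ (b - a) n = 0) ∧
    ∀ a ∈ e, ∀ c ∈ T, c ∉ e → inner ℝ (c - a) n < 0

theorem exists_isOutwardNormal (T e : Finset Pt)
    (hT : AffineIndependent ℝ ((↑) : T → Pt)) (hT3 : T.card = 3) (heT : e ⊆ T)
    (he2 : e.card = 2) : ∃ n, IsOutwardNormal T e n := by
  classical
  obtain ⟨a, b, hab, rfl⟩ := Finset.card_eq_two.1 he2
  obtain ⟨c, hc⟩ : ∃ c, T \ {a, b} = {c} := by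
    rw [← Finset.card_eq_one, Finset.card_sdiff_of_subset heT, hT3, he2]
  have hTc : ∀ x ∈ T, x ∉ ({a, b} : Finset Pt) → x = c := fun x hx hx' => by
    have : x ∈ T \ {a, b} := Finset.mem_sdiff.2 ⟨hx, hx'⟩
    simpa [hc] using this
  have hcT : c ∈ T := (Finset.mem_sdiff.1 (hc ▸ Finset.mem_singleton_self c)).1
  have hcab : c ≠ a ∧ c ≠ b := by
    have := (Finset.mem_sdiff.1 (hc ▸ Finset.mem_singleton_self c)).2
    simpa using this
  have hTeq : (T : Set Pt) = {a, b, c} := by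
    have : T = {a, b, c} := by
      rw [← Finset.sdiff_union_of_subset heT, hc]; ext x; simp; tauto
    rw [this]; simp
  have hncol : ¬ Collinear ℝ ({a, b, c} : Set Pt) := by
    rw [← affineIndependent_iff_not_collinear_set]
    have hmem : ∀ i, (![a, b, c] : Fin 3 → Pt) i ∈ T := by
      intro i; fin_cases i
      · exact heT (by simp)
      · exact heT (by simp)
      · exact hcT
    have := hT.comp_embedding (f := ⟨fun i : Fin 3 => (⟨![a, b, c] i, hmem i⟩ : T), by
      intro i j h
      have h' : ![a, b, c] i = ![a, b, c] j := congrArg Subtype.val h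
      fin_cases i <;> fin_cases j <;> simp_all [eq_comm]⟩)
    exact this
  set m : Pt := !₂[-((b - a) 1), (b - a) 0] with hm
  have hbm : inner ℝ (b - a) m = 0 := by
    simp [hm, EuclideanSpace.inner_eq_star_dotProduct, dotProduct, Fin.sum_univ_two]; ring
  have hba : b - a ≠ 0 := sub_ne_zero.2 hab.symm
  have hs : inner ℝ (c - a) m ≠ 0 := by
    intro h0
    apply hncol
    have h1 : (c 1 - a 1) * (b 0 - a 0) = (c 0 - a 0) * (b 1 - a 1) := by
      simp [hm, EuclideanSpace.inner_eq_star_dotProduct, dotProduct, Fin.sum_univ_two] at h0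
      linarith
    rw [collinear_iff_of_mem (p₀ := a) (by simp)]
    refine ⟨b - a, ?_⟩
    have hN : (b 0 - a 0) ^ 2 + (b 1 - a 1) ^ 2 ≠ 0 := by
      intro h
      apply hba
      have e0 : b 0 - a 0 = 0 := by nlinarith [sq_nonneg (b 0 - a 0), sq_nonneg (b 1 - a 1)]
      have e1 : b 1 - a 1 = 0 := by nlinarith [sq_nonneg (b 0 - a 0), sq_nonneg (b 1 - a 1)]
      ext i; fin_cases i <;> simpa
    intro x hx
    rcases hx with rfl | rfl | rfl
    · exact ⟨0, by simp⟩
    · exact ⟨1, by simp⟩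
    · refine ⟨((x 0 - a 0) * (b 0 - a 0) + (x 1 - a 1) * (b 1 - a 1)) /
        ((b 0 - a 0) ^ 2 + (b 1 - a 1) ^ 2), ?_⟩
      ext i
      fin_cases i
      · simp; field_simp; linear_combination (-(b 1 - a 1)) * h1
      · simp; field_simp; linear_combination ((b 0 - a 0)) * h1
  have hm0 : m ≠ 0 := by rintro h; simp [h] at hs
  have hnm : 0 < ‖m‖ := norm_pos_iff.2 hm0
  -- the right sign
  obtain ⟨σ, hσ, hσs⟩ : ∃ σ : ℝ, |σ| = 1 ∧ σ * inner ℝ (c - a) m < 0 := by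
    rcases lt_or_gt_of_ne hs with h | h
    · exact ⟨1, by simp, by simpa⟩
    · exact ⟨-1, by simp, by simpa⟩
  refine ⟨(σ * ‖m‖⁻¹) • m, ?_, ?_, ?_⟩
  · rw [norm_smul, norm_mul, Real.norm_eq_abs, hσ]; simp [hnm.ne']
  · intro x hx y hy
    rw [inner_smul_right]
    have : inner ℝ (y - x) m = 0 := by
      simp only [Finset.mem_insert, Finset.mem_singleton] at hx hy
      rcases hx with rfl | rfl <;> rcases hy with rfl | rfl
      · simp
      · exact hbm
      · rw [← neg_sub, inner_neg_left, hbm, neg_zero]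
      · simp
    rw [this, mul_zero]
  · intro x hx y hy hxy
    obtain rfl := hTc y hy hxy
    have h2 : inner ℝ (y - x) m = inner ℝ (y - a) m := by
      simp only [Finset.mem_insert, Finset.mem_singleton] at hx
      rcases hx with rfl | rfl
      · rfl
      · rw [← sub_add_sub_cancel y x a, inner_add_left, hbm, add_zero]
    rw [inner_smul_right, h2]
    have : σ * ‖m‖⁻¹ * inner ℝ (y - a) m = ‖m‖⁻¹ * (σ * inner ℝ (y - a) m) := by ring
    rw [this]
    exact mul_neg_of_pos_of_neg (inv_pos.2 hnm) hσs

/-- The outward unit normal `n` of the triangle `T` on its edge `e`. -/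
def normal (T e : Finset Pt) : Pt := Classical.epsilon (IsOutwardNormal T e)

/-- The weight `η|_{∂T} = h_T⁻¹`, where `h_T` is the diameter of `T`. -/
def eta (T : Finset Pt) : ℝ := (Metric.diam (hull T))⁻¹

namespace Triangulation

variable {Ω : Set Pt} (M : Triangulation Ω)

/-- The triangles of the triangulation. -/
def triangles : Finset (Finset Pt) := M.finite.toFinset.filter (fun s => s.card = 3)

/-- The set `E_h` of all edges. -/
def edges : Finset (Finset Pt) := M.finite.toFinset.filter (fun s => s.card = 2)

open Classical in
/-- The set `E_h^∂` of boundary edges, that is, of edges contained in `Γ = ∂Ω`. -/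
def bdryEdges : Finset (Finset Pt) := M.edges.filter (fun e => hull e ⊆ frontier Ω)

/-- The triangle `T` of which a given boundary edge `e` is an edge (there is exactly one). -/
def bdryTriangle (e : Finset Pt) : Finset Pt :=
  Classical.epsilon (fun T => T ∈ M.triangles ∧ e ⊆ T)

/-- The outward unit normal of `Ω` on the boundary edge `e`. -/
def bdryNormal (e : Finset Pt) : Pt := normal (M.bdryTriangle e) e

/-- The unit tangent `τ` of `Γ` on the boundary edge `e`: the outward unit normal rotated
counterclockwise by a right angle. -/
def tau (e : Finset Pt) : Pt := !₂[-(M.bdryNormal e 1), M.bdryNormal e 0]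

/-- The weight `η` on the boundary edge `e`. -/
def bdryEta (e : Finset Pt) : ℝ := eta (M.bdryTriangle e)

end Triangulation

/-! ### Polynomials, edge projections -/

/-- Polynomials in two variables. -/
abbrev Poly : Type := MvPolynomial (Fin 2) ℝ

/-- The value of a polynomial at a point. -/
def evalAt (p : Poly) (x : Pt) : ℝ := MvPolynomial.eval (fun i => x i) p

/-- The value at a point of a vector field with polynomial components. -/
def vecAt (v : Fin 2 → Poly) (x : Pt) : Pt := WithLp.toLp 2 fun i => evalAt (v i) x

/-- The value of `G n` at a point, for a tensor field `G` with polynomial components. -/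
def mulNormalAt (G : Fin 2 → Fin 2 → Poly) (n : Pt) (x : Pt) : Pt :=
  WithLp.toLp 2 fun i => ∑ j, evalAt (G i j) x * n j

/-- On the edge `e`, the polynomial `p` is the `L²` projection of `g` onto `P_m(e)`. -/
def IsEdgeProj (m : ℕ) (e : Finset Pt) (g : Pt → ℝ) (p : Poly) : Prop :=
  p.totalDegree ≤ m ∧ ∀ w : Poly, w.totalDegree ≤ m →
    ∫ x, evalAt p x * evalAt w x ∂edgeMeasure e = ∫ x, g x * evalAt w x ∂edgeMeasure e

theorem continuous_evalAt (p : Poly) : Continuous (evalAt p) := by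
  unfold evalAt
  exact (MvPolynomial.continuous_eval p).comp (by fun_prop)

theorem edgeMeasure_hull_lt_top (e : Finset Pt) (he : e.card = 2) :
    edgeMeasure e Set.univ < ⊤ := by
  classical
  obtain ⟨a, b, -, rfl⟩ := Finset.card_eq_two.1 he
  simp [edgeMeasure, hull, convexHull_pair, hausdorffMeasure_segment, edist_lt_top]

theorem memLp_evalAt (e : Finset Pt) (he : e.card = 2) (p : Poly) :
    MemLp (evalAt p) 2 (edgeMeasure e) := by
  have : IsFiniteMeasure (edgeMeasure e) := ⟨edgeMeasure_hull_lt_top e he⟩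
  have hcomp : IsCompact (hull e) := e.finite_toSet.isCompact_convexHull (𝕜 := ℝ)
  obtain ⟨C, hC⟩ := hcomp.exists_bound_of_continuousOn (continuous_evalAt p).continuousOn
  refine MemLp.of_bound (continuous_evalAt p).aestronglyMeasurable C ?_
  exact (ae_restrict_iff' hcomp.measurableSet).2 (Filter.Eventually.of_forall hC)

theorem exists_isEdgeProj (m : ℕ) (e : Finset Pt) (he : e.card = 2) (g : Pt → ℝ)
    (hg : MemLp g 2 (edgeMeasure e)) : ∃ p, IsEdgeProj m e g p := by
  let A : MvPolynomial.restrictTotalDegree (Fin 2) ℝ m →ₗ[ℝ] Lp ℝ 2 (edgeMeasure e) :=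
    { toFun := fun p => (memLp_evalAt e he p.1).toLp _
      map_add' := fun p q => by
        rw [← MemLp.toLp_add]; congr 1; ext x; simp [evalAt]
      map_smul' := fun c p => by
        rw [RingHom.id_apply, ← MemLp.toLp_const_smul]; congr 1; ext x; simp [evalAt] }
  have : Module.Finite ℝ (LinearMap.range A) := Module.Finite.range A
  have hint : ∀ (a b : Pt → ℝ) (ha : MemLp a 2 (edgeMeasure e)) (hb : MemLp b 2 (edgeMeasure e)),
      inner ℝ (ha.toLp a) (hb.toLp b) = ∫ x, a x * b x ∂edgeMeasure e := by
    intro a b ha hb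
    rw [L2.inner_def]
    refine integral_congr_ae ?_
    filter_upwards [ha.coeFn_toLp, hb.coeFn_toLp] with x h1 h2
    rw [h1, h2]; simp [mul_comm]
  obtain ⟨p, hp⟩ := ((LinearMap.range A).orthogonalProjectionOnto (hg.toLp g)).2
  refine ⟨p.1, (MvPolynomial.mem_restrictTotalDegree _ _ _).1 p.2, fun w hw => ?_⟩
  have := Submodule.starProjection_inner_eq_zero (K := LinearMap.range A) (hg.toLp g)
    (A ⟨w, (MvPolynomial.mem_restrictTotalDegree _ _ _).2 hw⟩) ⟨_, rfl⟩
  rw [Submodule.starProjection_apply, ← hp, inner_sub_left, sub_eq_zero] at this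
  have h1 := hint g (evalAt w) hg (memLp_evalAt e he w)
  have h2 := hint (evalAt p.1) (evalAt w) (memLp_evalAt e he p.1) (memLp_evalAt e he w)
  rw [← h1, ← h2]
  exact this.symm

/-- The edgewise `L²` projection `Π_m^∂ g` on the edge `e`, as a function on `e`. -/
def edgeProj (m : ℕ) (e : Finset Pt) (g : Pt → ℝ) (x : Pt) : ℝ :=
  evalAt (Classical.epsilon (IsEdgeProj m e g)) x

/-- The edgewise `L²` projection of a vector field, taken componentwise. -/
def edgeProjVec (m : ℕ) (e : Finset Pt) (g : Pt → Pt) (x : Pt) : Pt :=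
  WithLp.toLp 2 fun i => edgeProj m e (fun y => g y i) x

/-! ### Broken polynomial fields

A field that is polynomial on every triangle is given by its polynomial on every triangle `T`
(the values at vertex sets that are not triangles of the mesh play no role); the polynomial of `T`
also gives the trace on `∂T`. Fields on the skeleton are functions of the point, considered up to
equality almost everywhere on edges. -/

abbrev BrokenScal : Type := Finset Pt → Poly
abbrev BrokenVec : Type := Finset Pt → Fin 2 → Poly
abbrev BrokenTen : Type := Finset Pt → Fin 2 → Fin 2 → Poly

/-- The elementwise divergence of a vector field. -/
def divVec (v : BrokenVec) : BrokenScal := fun T => ∑ j, MvPolynomial.pderiv j (v T j)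

/-- The elementwise (rowwise) divergence of a tensor field. -/
def divTen (G : BrokenTen) : BrokenVec := fun T i => ∑ j, MvPolynomial.pderiv j (G T i j)

namespace Triangulation

variable {Ω : Set Pt} (M : Triangulation Ω)

/-- `(p, q)_{T_h}` for scalar fields. -/
def ipScal (p q : BrokenScal) : ℝ :=
  ∑ T ∈ M.triangles, ∫ x in hull T, evalAt (p T) x * evalAt (q T) x

/-- `(v, w)_{T_h}` for vector fields. -/
def ipVec (v w : BrokenVec) : ℝ :=
  ∑ T ∈ M.triangles, ∫ x in hull T, inner ℝ (vecAt (v T) x) (vecAt (w T) x)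

/-- `(G, H)_{T_h}` for tensor fields. -/
def ipTen (G H : BrokenTen) : ℝ :=
  ∑ T ∈ M.triangles, ∫ x in hull T, ∑ i, ∑ j, evalAt (G T i j) x * evalAt (H T i j) x

/-- `(f, v)_{T_h}` for a field `f` on `Ω`. -/
def load (f : Pt → Pt) (v : BrokenVec) : ℝ :=
  ∑ T ∈ M.triangles, ∫ x in hull T, inner ℝ (f x) (vecAt (v T) x)

/-- `(y - y_d, v)_{T_h}` for a broken polynomial field `y` and a field `y_d` on `Ω`. -/
def loadDiff (y : BrokenVec) (yd : Pt → Pt) (v : BrokenVec) : ℝ :=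
  ∑ T ∈ M.triangles, ∫ x in hull T, inner ℝ (vecAt (y T) x - yd x) (vecAt (v T) x)

/-- `⟨a, b⟩_{∂T_h} = ∑_T ∑_{e ⊂ ∂T} ∫_e a · b` for fields that may take different values on the two
sides of an edge. -/
def ipSkel (a b : Finset Pt → Finset Pt → Pt → Pt) : ℝ :=
  ∑ T ∈ M.triangles, ∑ e ∈ T.powersetCard 2,
    ∫ x, inner ℝ (a T e x) (b T e x) ∂edgeMeasure e

/-- `⟨a, b⟩_Γ = ⟨a, b⟩_{E_h^∂} = ∑_{e ∈ E_h^∂} ∫_e a · b`. -/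
def ipBdry (a b : Finset Pt → Pt → Pt) : ℝ :=
  ∑ e ∈ M.bdryEdges, ∫ x, inner ℝ (a e x) (b e x) ∂edgeMeasure e

/-- The norm `‖v‖_{T_h}` of a vector field. -/
def normVec (v : BrokenVec) : ℝ :=
  Real.sqrt (∑ T ∈ M.triangles, ∫ x in hull T, ‖vecAt (v T) x‖ ^ 2)

/-- The norm `‖c‖_{E_h^∂}` of a scalar function on `Γ`. -/
def normBdry (c : Pt → ℝ) : ℝ :=
  Real.sqrt (∑ e ∈ M.bdryEdges, ∫ x, ‖c x‖ ^ 2 ∂edgeMeasure e)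

/-- `G n` on `∂T_h`. -/
def skelNormal (G : BrokenTen) : Finset Pt → Finset Pt → Pt → Pt :=
  fun T e x => mulNormalAt (G T) (normal T e) x

/-- `Π_{m}^∂ v - v̂` on `∂T_h`. -/
def skelJump (m : ℕ) (v : BrokenVec) (vhat : Pt → Pt) : Finset Pt → Finset Pt → Pt → Pt :=
  fun T e x => edgeProjVec m e (vecAt (v T)) x - vhat x

/-- `c τ` on `Γ`, for a scalar function `c`. -/
def tang (c : Pt → ℝ) : Finset Pt → Pt → Pt := fun e x => c x • M.tau e

/-- `G n` on `Γ`. -/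
def bdryFlux (G : BrokenTen) : Finset Pt → Pt → Pt :=
  fun e x => mulNormalAt (G (M.bdryTriangle e)) (M.bdryNormal e) x

/-- The trace of `v` on `Γ`. -/
def bdryTrace (v : BrokenVec) : Finset Pt → Pt → Pt :=
  fun e x => vecAt (v (M.bdryTriangle e)) x

/-- `η a` on `Γ`. -/
def etaMul (a : Finset Pt → Pt → Pt) : Finset Pt → Pt → Pt := fun e x => M.bdryEta e • a e x

/-- `Π_m^∂ a` on `Γ`. -/
def bdryProj (m : ℕ) (a : Finset Pt → Pt → Pt) : Finset Pt → Pt → Pt :=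
  fun e x => edgeProjVec m e (a e) x

/-- `(Π_m^∂ c) τ` on `Γ`, for a scalar function `c`. -/
def tangProj (m : ℕ) (c : Pt → ℝ) : Finset Pt → Pt → Pt :=
  fun e x => edgeProj m e c x • M.tau e

/-! ### The finite element spaces -/

/-- `Σ_h`: tensor fields with components in `P_{k-1}(T)` on every triangle. -/
def Sig (k : ℕ) : Set BrokenTen :=
  {G | ∀ T ∈ M.triangles, ∀ i j, (G T i j).totalDegree ≤ k - 1}

/-- The broken polynomial field `v` lies in `H(div; Ω)`: its distributional divergence on `Ω` is a
square integrable function. -/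
def IsHDiv (v : BrokenVec) : Prop :=
  ∃ g : Pt → ℝ, MemLp g 2 (volume.restrict Ω) ∧
    ∀ φ : Pt → ℝ, ContDiff ℝ (⊤ : ℕ∞) φ → HasCompactSupport φ → tsupport φ ⊆ Ω →
      ∑ T ∈ M.triangles, ∫ x in hull T, fderiv ℝ φ x (vecAt (v T) x)
        = -∫ x in Ω, g x * φ x

/-- `V_h^0`: fields in `H(div; Ω)` with components in `P_k(T)` on every triangle and with
vanishing normal component on `Γ`. -/
def Vel (k : ℕ) : Set BrokenVec :=
  {v | (∀ T ∈ M.triangles, ∀ i, (v T i).totalDegree ≤ k) ∧ M.IsHDiv v ∧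
    ∀ e ∈ M.bdryEdges, ∀ x ∈ hull e, inner ℝ (M.bdryTrace v e x) (M.bdryNormal e) = 0}

/-- `V̂_h^0`: vector fields on the skeleton with components in `P_{k-1}(e)` on every edge `e`,
vanishing on `Γ`. -/
def Hyb (k : ℕ) : Set (Pt → Pt) :=
  {vhat | (∀ e ∈ M.edges, ∃ p : Fin 2 → Poly, (∀ i, (p i).totalDegree ≤ k - 1) ∧
      vhat =ᵐ[edgeMeasure e] vecAt p) ∧
    ∀ e ∈ M.bdryEdges, vhat =ᵐ[edgeMeasure e] 0}

/-- `U_h`: functions on `Γ` that belong to `P_{k-1}(e)` on every boundary edge `e`. -/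
def Ctrl (k : ℕ) : Set (Pt → ℝ) :=
  {c | ∀ e ∈ M.bdryEdges, ∃ p : Poly, p.totalDegree ≤ k - 1 ∧ c =ᵐ[edgeMeasure e] evalAt p}

/-- `Q_h`: scalar fields belonging to `P_{k-1}(T)` on every triangle, with mean value zero. -/
def Pres (k : ℕ) : Set BrokenScal :=
  {q | (∀ T ∈ M.triangles, (q T).totalDegree ≤ k - 1) ∧
    ∑ T ∈ M.triangles, ∫ x in hull T, evalAt (q T) x = 0}

/-! ### The discrete problems -/

/-- The bilinear form `ℬ(L, y, ŷ, p; G, v, v̂, q)` with `ν = 1`. -/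
def B (k : ℕ) (L : BrokenTen) (y : BrokenVec) (yhat : Pt → Pt) (p : BrokenScal)
    (G : BrokenTen) (v : BrokenVec) (vhat : Pt → Pt) (q : BrokenScal) : ℝ :=
  M.ipTen L G + M.ipVec y (divTen G) - M.ipSkel (fun _ _ x => yhat x) (skelNormal G)
    - M.ipVec (divTen L) v + M.ipSkel (skelNormal L) (fun _ _ x => vhat x)
    - M.ipScal p (divVec v)
    + M.ipSkel (fun T e x => eta T • skelJump (k - 1) y yhat T e x) (skelJump (k - 1) v vhat)
    + M.ipScal (divVec y) q

/-- `(L, y, ŷ, p) ∈ Σ_h × V_h^0 × V̂_h^0 × Q_h` solves the discrete state equation with force `f`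
and boundary datum `g`:
`ℬ(L, y, ŷ, p; G, v, v̂, q) = (f, v)_{T_h} + ⟨g, G n⟩_Γ + ⟨η g, v⟩_Γ` for all test functions. -/
structure IsState (k : ℕ) (f : Pt → Pt) (g : Finset Pt → Pt → Pt)
    (L : BrokenTen) (y : BrokenVec) (yhat : Pt → Pt) (p : BrokenScal) : Prop where
  memL : L ∈ M.Sig k
  memY : y ∈ M.Vel k
  memYhat : yhat ∈ M.Hyb k
  memP : p ∈ M.Pres k
  eqn : ∀ G ∈ M.Sig k, ∀ v ∈ M.Vel k, ∀ vhat ∈ M.Hyb k, ∀ q ∈ M.Pres k,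
    M.B k L y yhat p G v vhat q
      = M.load f v + M.ipBdry g (M.bdryFlux G) + M.ipBdry (M.etaMul g) (M.bdryTrace v)

/-- `(T, z, ẑ, w) ∈ Σ_h × V_h^0 × V̂_h^0 × Q_h` solves the discrete adjoint equation
`ℬ(T, z, ẑ, w; G, v, v̂, q) = (y - y_d, v)_{T_h}` for all test functions. -/
structure IsAdjoint (k : ℕ) (y : BrokenVec) (yd : Pt → Pt)
    (T : BrokenTen) (z : BrokenVec) (zhat : Pt → Pt) (w : BrokenScal) : Prop where
  memT : T ∈ M.Sig k
  memZ : z ∈ M.Vel k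
  memZhat : zhat ∈ M.Hyb k
  memW : w ∈ M.Pres k
  eqn : ∀ G ∈ M.Sig k, ∀ v ∈ M.Vel k, ∀ vhat ∈ M.Hyb k, ∀ q ∈ M.Pres k,
    M.B k T z zhat w G v vhat q = M.loadDiff y yd v

/-- The boundary field `γ c τ - T n + η Π_m^∂ z` on `Γ`. -/
def residual (m : ℕ) (γ : ℝ) (c : Pt → ℝ) (T : BrokenTen) (z : BrokenVec) :
    Finset Pt → Pt → Pt :=
  γ • M.tang c - M.bdryFlux T + M.etaMul (bdryProj m (M.bdryTrace z))

/-- The discrete optimality system: state equation with control `u_h`, adjoint equation with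
right-hand side `y_h - y_d`, and
`⟨γ u_h τ - T_h n + η Π_k^∂ z_h, μ τ⟩_Γ = 0` for all `μ ∈ U_h`. -/
structure IsDiscreteOptimal (k : ℕ) (γ : ℝ) (f yd : Pt → Pt)
    (Lh : BrokenTen) (yh : BrokenVec) (yhath : Pt → Pt) (ph : BrokenScal)
    (Th : BrokenTen) (zh : BrokenVec) (zhath : Pt → Pt) (wh : BrokenScal)
    (uh : Pt → ℝ) : Prop where
  memU : uh ∈ M.Ctrl k
  state : M.IsState k f (M.tang uh) Lh yh yhath ph
  adjoint : M.IsAdjoint k yh yd Th zh zhath wh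
  optimality : ∀ μ ∈ M.Ctrl k, M.ipBdry (M.residual k γ uh Th zh) (M.tang μ) = 0

end Triangulation

end HDGControl

end

open MeasureTheory

noncomputable section

namespace HDGControl

/-! ### Polynomial functions and edge projections -/

/-- Evaluation of polynomials, as a linear map into functions on the plane. -/
def evalLin : Poly →ₗ[ℝ] (Pt → ℝ) where
  toFun := evalAt
  map_add' p q := by ext x; simp [evalAt]
  map_smul' c p := by ext x; simp [evalAt]

/-- The functions on the plane given by polynomials of total degree at most `m`. -/
def polyFun (m : ℕ) : Submodule ℝ (Pt → ℝ) :=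
  (MvPolynomial.restrictTotalDegree (Fin 2) ℝ m).map evalLin

theorem mem_polyFun {m : ℕ} {g : Pt → ℝ} :
    g ∈ polyFun m ↔ ∃ p : Poly, p.totalDegree ≤ m ∧ evalAt p = g := by
  simp only [polyFun, Submodule.mem_map, MvPolynomial.mem_restrictTotalDegree]
  rfl

theorem evalAt_mem_polyFun {m : ℕ} {p : Poly} (hp : p.totalDegree ≤ m) :
    evalAt p ∈ polyFun m :=
  mem_polyFun.2 ⟨p, hp, rfl⟩

theorem memLp_of_mem_polyFun {m : ℕ} {e : Finset Pt} (he : e.card = 2) {g : Pt → ℝ}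
    (hg : g ∈ polyFun m) : MemLp g 2 (edgeMeasure e) := by
  obtain ⟨p, -, rfl⟩ := mem_polyFun.1 hg
  exact memLp_evalAt e he p

theorem isEdgeProj_epsilon {m : ℕ} {e : Finset Pt} (he : e.card = 2) {g : Pt → ℝ}
    (hg : MemLp g 2 (edgeMeasure e)) :
    IsEdgeProj m e g (Classical.epsilon (IsEdgeProj m e g)) :=
  Classical.epsilon_spec (exists_isEdgeProj m e he g hg)

theorem edgeProj_mem_polyFun {m : ℕ} {e : Finset Pt} (he : e.card = 2) {g : Pt → ℝ}
    (hg : MemLp g 2 (edgeMeasure e)) : edgeProj m e g ∈ polyFun m :=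
  evalAt_mem_polyFun (isEdgeProj_epsilon he hg).1

theorem integral_edgeProj_mul {m : ℕ} {e : Finset Pt} (he : e.card = 2) {g w : Pt → ℝ}
    (hg : MemLp g 2 (edgeMeasure e)) (hw : w ∈ polyFun m) :
    ∫ x, edgeProj m e g x * w x ∂edgeMeasure e = ∫ x, g x * w x ∂edgeMeasure e := by
  obtain ⟨p, hp, rfl⟩ := mem_polyFun.1 hw
  exact (isEdgeProj_epsilon he hg).2 p hp

theorem inner_eq_sum (a b : Pt) : inner ℝ a b = ∑ i, b i * a i := by
  simp [PiLp.inner_apply]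

theorem inner_mulNormalAt_mem_polyFun {m : ℕ} {G : Fin 2 → Fin 2 → Poly}
    (hG : ∀ i j, (G i j).totalDegree ≤ m) (n t : Pt) :
    (fun x => inner ℝ (mulNormalAt G n x) t) ∈ polyFun m := by
  have : (fun x => inner ℝ (mulNormalAt G n x) t)
      = ∑ i, t i • ∑ j, n j • evalAt (G i j) := by
    ext x
    simp [inner_eq_sum, mulNormalAt]
    ring
  rw [this]
  exact Submodule.sum_mem _ fun i _ => Submodule.smul_mem _ _ <|
    Submodule.sum_mem _ fun j _ => Submodule.smul_mem _ _ (evalAt_mem_polyFun (hG i j))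

theorem inner_edgeProjVec_mem_polyFun {m : ℕ} {e : Finset Pt} (he : e.card = 2)
    (v : Fin 2 → Poly) (t : Pt) :
    (fun x => inner ℝ (edgeProjVec m e (vecAt v) x) t) ∈ polyFun m := by
  have : (fun x => inner ℝ (edgeProjVec m e (vecAt v) x) t)
      = ∑ i, t i • edgeProj m e (evalAt (v i)) := by
    ext x
    simp [inner_eq_sum, edgeProjVec, vecAt]
  rw [this]
  exact Submodule.sum_mem _ fun i _ => Submodule.smul_mem _ _ <|
    edgeProj_mem_polyFun he (memLp_evalAt e he (v i))

theorem integral_mul_inner_edgeProjVec {m : ℕ} {e : Finset Pt} (he : e.card = 2)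
    (v : Fin 2 → Poly) (t : Pt) {w : Pt → ℝ} (hw : w ∈ polyFun m) :
    ∫ x, w x * inner ℝ (edgeProjVec m e (vecAt v) x) t ∂edgeMeasure e
      = ∫ x, w x * inner ℝ (vecAt v x) t ∂edgeMeasure e := by
  have hwL := memLp_of_mem_polyFun he hw
  have h1 : ∀ x, w x * inner ℝ (edgeProjVec m e (vecAt v) x) t
      = ∑ i, t i * (edgeProj m e (evalAt (v i)) x * w x) := fun x => by
    simp [inner_eq_sum, edgeProjVec, vecAt]; ring
  have h2 : ∀ x, w x * inner ℝ (vecAt v x) t = ∑ i, t i * (evalAt (v i) x * w x) := fun x => by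
    simp [inner_eq_sum, vecAt]; ring
  simp_rw [h1, h2]
  rw [integral_finsetSum, integral_finsetSum]
  · simp_rw [integral_const_mul, integral_edgeProj_mul he (memLp_evalAt e he _) hw]
  · exact fun i _ => ((memLp_evalAt e he (v i)).integrable_mul hwL).const_mul _
  · exact fun i _ => ((memLp_of_mem_polyFun he
      (edgeProj_mem_polyFun he (memLp_evalAt e he (v i)))).integrable_mul hwL).const_mul _

theorem continuous_vecAt (v : Fin 2 → Poly) : Continuous (vecAt v) :=
  (PiLp.continuous_toLp 2 _).comp (continuous_pi fun i => continuous_evalAt (v i))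

theorem vecAt_sub (v w : Fin 2 → Poly) (x : Pt) : vecAt (v - w) x = vecAt v x - vecAt w x := by
  ext i
  simp [vecAt, evalAt]

theorem integrable_inner_of_memLp {α : Type*} [MeasurableSpace α] {μ : Measure α} {a b : α → Pt}
    (ha : MemLp a 2 μ) (hb : MemLp b 2 μ) : Integrable (fun x => inner ℝ (a x) (b x)) μ := by
  refine (L2.integrable_inner (𝕜 := ℝ) (ha.toLp a) (hb.toLp b)).congr ?_
  filter_upwards [ha.coeFn_toLp, hb.coeFn_toLp] with x h1 h2
  rw [h1, h2]

theorem isCompact_hull (s : Finset Pt) : IsCompact (hull s) :=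
  s.finite_toSet.isCompact_convexHull (𝕜 := ℝ)

theorem memLp_vecAt_hull (T : Finset Pt) (v : Fin 2 → Poly) :
    MemLp (vecAt v) 2 (volume.restrict (hull T)) := by
  have hc := isCompact_hull T
  have : IsFiniteMeasure (volume.restrict (hull T)) := ⟨by simpa using hc.measure_lt_top⟩
  obtain ⟨C, hC⟩ := hc.exists_bound_of_continuousOn (continuous_vecAt v).continuousOn
  exact MemLp.of_bound (continuous_vecAt v).aestronglyMeasurable C
    ((ae_restrict_iff' hc.measurableSet).2 (Filter.Eventually.of_forall hC))

/-! ### Geometry of the mesh -/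

theorem volume_segment (a b : Pt) : volume (segment ℝ a b) = 0 := by
  refine measure_mono_null (t := (line[ℝ, a, b] : Set Pt)) ?_
    (Measure.addHaar_affineSubspace _ _ ?_)
  · rw [← convexHull_pair]
    exact convexHull_subset_affineSpan _
  · intro h
    have h1 := congrArg (fun s : AffineSubspace ℝ Pt => Module.finrank ℝ s.direction) h
    have h2 := (collinear_iff_finrank_le_one.1 (collinear_pair ℝ a b))
    rw [← direction_affineSpan] at h2
    rw [AffineSubspace.direction_top, finrank_top, finrank_euclideanSpace_fin] at h1
    omega

theorem IsPolygonalDomain.volume_frontier {Ω : Set Pt} (hΩ : IsPolygonalDomain Ω) :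
    volume (frontier Ω) = 0 := by
  obtain ⟨S, hS⟩ := hΩ.polygonal
  rw [hS]
  exact (measure_biUnion_null_iff S.countable_toSet).2 fun s _ => volume_segment s.1 s.2

theorem IsPolygonalDomain.restrict_closure {Ω : Set Pt} (hΩ : IsPolygonalDomain Ω) :
    (volume : Measure Pt).restrict (closure Ω) = volume.restrict Ω := by
  refine Measure.restrict_congr_set ?_
  rw [closure_eq_self_union_frontier]
  exact union_ae_eq_left_of_ae_eq_empty (ae_eq_empty.2 hΩ.volume_frontier)

theorem IsOutwardNormal.norm_rotate {T e : Finset Pt} {n : Pt} (hn : IsOutwardNormal T e n) :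
    ‖(!₂[-(n 1), n 0] : Pt)‖ = 1 := by
  rw [← hn.1, EuclideanSpace.norm_eq, EuclideanSpace.norm_eq]
  simp [Fin.sum_univ_two, add_comm]

namespace Triangulation

variable {Ω : Set Pt} (M : Triangulation Ω)

theorem mem_triangles {T : Finset Pt} : T ∈ M.triangles ↔ T ∈ M.K.faces ∧ T.card = 3 := by
  simp [triangles]

theorem mem_bdryEdges {e : Finset Pt} :
    e ∈ M.bdryEdges ↔ (e ∈ M.K.faces ∧ e.card = 2) ∧ hull e ⊆ frontier Ω := by
  simp [bdryEdges, edges]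

theorem hull_subset_closure {T : Finset Pt} (hT : T ∈ M.triangles) : hull T ⊆ closure Ω := by
  rw [← M.space_eq]
  exact M.K.convexHull_subset_space (M.mem_triangles.1 hT).1

theorem bdryTriangle_spec {e : Finset Pt} (he : e ∈ M.bdryEdges) :
    M.bdryTriangle e ∈ M.triangles ∧ e ⊆ M.bdryTriangle e := by
  obtain ⟨t, ht, het, ht3⟩ := M.pure e (M.mem_bdryEdges.1 he).1.1
  exact Classical.epsilon_spec (p := fun T => T ∈ M.triangles ∧ e ⊆ T)
    ⟨t, M.mem_triangles.2 ⟨ht, ht3⟩, het⟩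

theorem norm_tau {e : Finset Pt} (he : e ∈ M.bdryEdges) : ‖M.tau e‖ = 1 := by
  obtain ⟨hT, heT⟩ := M.bdryTriangle_spec he
  obtain ⟨hT, hT3⟩ := M.mem_triangles.1 hT
  exact IsOutwardNormal.norm_rotate <| Classical.epsilon_spec <|
    exists_isOutwardNormal _ e (M.K.indep hT) hT3 heT (M.mem_bdryEdges.1 he).1.2

theorem memLp_of_memLp_frontier {u : Pt → ℝ}
    (hu : MemLp u 2 ((Measure.hausdorffMeasure 1).restrict (frontier Ω)))
    {e : Finset Pt} (he : e ∈ M.bdryEdges) : MemLp u 2 (edgeMeasure e) :=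
  hu.mono_measure (Measure.restrict_mono (M.mem_bdryEdges.1 he).2 le_rfl)

theorem memLp_of_mem_Ctrl {k : ℕ} {c : Pt → ℝ} (hc : c ∈ M.Ctrl k)
    {e : Finset Pt} (he : e ∈ M.bdryEdges) : MemLp c 2 (edgeMeasure e) := by
  obtain ⟨p, -, hp⟩ := hc e he
  exact (memLp_congr_ae hp).2 (memLp_evalAt e (M.mem_bdryEdges.1 he).1.2 p)

/-! ### Symmetry of the bilinear form -/

theorem ipVec_comm (v w : BrokenVec) : M.ipVec v w = M.ipVec w v := by
  simp only [ipVec, real_inner_comm]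

theorem ipScal_comm (p q : BrokenScal) : M.ipScal p q = M.ipScal q p := by
  simp only [ipScal, mul_comm]

theorem ipTen_comm (G H : BrokenTen) : M.ipTen G H = M.ipTen H G := by
  simp only [ipTen, mul_comm]

theorem ipSkel_comm (a b : Finset Pt → Finset Pt → Pt → Pt) : M.ipSkel a b = M.ipSkel b a := by
  simp only [ipSkel, real_inner_comm]

theorem ipSkel_eta_comm (a b : Finset Pt → Finset Pt → Pt → Pt) :
    M.ipSkel (fun T e x => eta T • a T e x) b = M.ipSkel (fun T e x => eta T • b T e x) a := by
  simp only [ipSkel, real_inner_smul_left]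
  simp only [real_inner_comm]

theorem ipTen_neg_right (G H : BrokenTen) : M.ipTen G (-H) = -M.ipTen G H := by
  simp only [ipTen, evalAt, Pi.neg_apply, map_neg, mul_neg, Finset.sum_neg_distrib, integral_neg]

theorem ipScal_neg_right (p q : BrokenScal) : M.ipScal p (-q) = -M.ipScal p q := by
  simp [ipScal, evalAt, integral_neg]

theorem vecAt_neg (v : Fin 2 → Poly) (x : Pt) : vecAt (-v) x = -vecAt v x := by
  ext i
  simp [vecAt, evalAt]

theorem ipVec_neg_right (v w : BrokenVec) : M.ipVec v (-w) = -M.ipVec v w := by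
  simp [ipVec, vecAt_neg, integral_neg]

theorem divTen_neg (G : BrokenTen) : divTen (-G) = -divTen G := by
  ext1 T; ext1 i
  simp [divTen, add_comm]

theorem mulNormalAt_neg (G : Fin 2 → Fin 2 → Poly) (n x : Pt) :
    mulNormalAt (-G) n x = -mulNormalAt G n x := by
  ext i
  simp [mulNormalAt, evalAt, add_comm]

theorem ipSkel_skelNormal_neg_right (a : Finset Pt → Finset Pt → Pt → Pt) (G : BrokenTen) :
    M.ipSkel a (skelNormal (-G)) = -M.ipSkel a (skelNormal G) := by
  simp [ipSkel, skelNormal, mulNormalAt_neg, integral_neg]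

theorem ipBdry_bdryFlux_neg_right (a : Finset Pt → Pt → Pt) (G : BrokenTen) :
    M.ipBdry a (M.bdryFlux (-G)) = -M.ipBdry a (M.bdryFlux G) := by
  simp [ipBdry, bdryFlux, mulNormalAt_neg, integral_neg]

theorem B_symm (k : ℕ) (L : BrokenTen) (y : BrokenVec) (yhat : Pt → Pt) (p : BrokenScal)
    (T : BrokenTen) (z : BrokenVec) (zhat : Pt → Pt) (w : BrokenScal) :
    M.B k L y yhat p (-T) z zhat (-w) = M.B k T z zhat w (-L) y yhat (-p) := by
  simp only [B, ipTen_neg_right, ipScal_neg_right, divTen_neg, ipVec_neg_right,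
    ipSkel_skelNormal_neg_right]
  rw [M.ipTen_comm T L, M.ipVec_comm z, M.ipVec_comm (divTen T), M.ipScal_comm w,
    M.ipScal_comm (divVec z), M.ipSkel_comm (fun _ _ x => zhat x),
    M.ipSkel_comm (skelNormal T), M.ipSkel_eta_comm (skelJump (k - 1) z zhat)]
  ring

theorem neg_mem_Sig {k : ℕ} {G : BrokenTen} (hG : G ∈ M.Sig k) : -G ∈ M.Sig k := fun T hT i j => by
  simpa [MvPolynomial.totalDegree_neg] using hG T hT i j

theorem neg_mem_Pres {k : ℕ} {q : BrokenScal} (hq : q ∈ M.Pres k) : -q ∈ M.Pres k := by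
  refine ⟨fun T hT => by simpa [MvPolynomial.totalDegree_neg] using hq.1 T hT, ?_⟩
  have := hq.2
  simp only [evalAt] at this
  simp [evalAt, integral_neg, this]

variable {M}

/-- Testing the state equation with the adjoint solution and vice versa. -/
theorem IsState.duality {k : ℕ} {f yd : Pt → Pt} {g : Finset Pt → Pt → Pt}
    {L T : BrokenTen} {y y' z : BrokenVec} {yhat zhat : Pt → Pt} {p w : BrokenScal}
    (hs : M.IsState k f g L y yhat p) (ha : M.IsAdjoint k y' yd T z zhat w) :
    M.loadDiff y' yd y
      = M.load f z - M.ipBdry g (M.bdryFlux T) + M.ipBdry (M.etaMul g) (M.bdryTrace z) := by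
  rw [← ha.eqn _ (M.neg_mem_Sig hs.memL) y hs.memY yhat hs.memYhat _ (M.neg_mem_Pres hs.memP),
    ← M.B_symm,
    hs.eqn _ (M.neg_mem_Sig ha.memT) z ha.memZ zhat ha.memZhat _ (M.neg_mem_Pres ha.memW),
    ipBdry_bdryFlux_neg_right, sub_eq_add_neg]

variable (M)

/-! ### Norms and boundary pairings -/

theorem normVec_sub_sq (hΩ : IsPolygonalDomain Ω) {yd : Pt → Pt}
    (hyd : MemLp yd 2 (volume.restrict Ω)) (v w : BrokenVec) :
    M.normVec (v - w) ^ 2 = M.loadDiff v yd v - M.loadDiff v yd w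
      - M.loadDiff w yd v + M.loadDiff w yd w := by
  rw [normVec, Real.sq_sqrt
    (Finset.sum_nonneg fun T _ => integral_nonneg fun x => sq_nonneg _)]
  simp only [loadDiff, ← Finset.sum_sub_distrib, ← Finset.sum_add_distrib]
  refine Finset.sum_congr rfl fun T hT => ?_
  have hydT : MemLp yd 2 (volume.restrict (hull T)) := by
    rw [← hΩ.restrict_closure] at hyd
    exact hyd.mono_measure (Measure.restrict_mono (M.hull_subset_closure hT) le_rfl)
  have hint : ∀ a b : BrokenVec,
      IntegrableOn (fun x => inner ℝ (vecAt (a T) x - yd x) (vecAt (b T) x)) (hull T) :=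
    fun a b => integrable_inner_of_memLp ((memLp_vecAt_hull T (a T)).sub hydT)
      (memLp_vecAt_hull T (b T))
  have hvv := hint v v
  have hvw := hint v w
  have hwv := hint w v
  have hww := hint w w
  rw [← integral_sub hvv hvw, ← integral_sub (by exact hvv.sub hvw) hwv,
    ← integral_add (by exact (hvv.sub hvw).sub hwv) hww]
  refine integral_congr_ae (Filter.Eventually.of_forall fun x => ?_)
  simp only [Pi.sub_apply, vecAt_sub, ← real_inner_self_eq_norm_sq, inner_sub_left,
    inner_sub_right]
  ring

theorem normBdry_sub_sq {u c : Pt → ℝ} (hu : ∀ e ∈ M.bdryEdges, MemLp u 2 (edgeMeasure e))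
    (hc : ∀ e ∈ M.bdryEdges, MemLp c 2 (edgeMeasure e)) :
    M.normBdry (u - c) ^ 2 = ∑ e ∈ M.bdryEdges, ∫ x, u x * (u - c) x ∂edgeMeasure e
      - ∑ e ∈ M.bdryEdges, ∫ x, c x * (u - c) x ∂edgeMeasure e := by
  rw [normBdry, Real.sq_sqrt
    (Finset.sum_nonneg fun T _ => integral_nonneg fun x => sq_nonneg _),
    ← Finset.sum_sub_distrib]
  refine Finset.sum_congr rfl fun e he => ?_
  have hd := (hu e he).sub (hc e he)
  rw [← integral_sub (by exact (hu e he).integrable_mul hd)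
    (by exact (hc e he).integrable_mul hd)]
  refine integral_congr_ae (Filter.Eventually.of_forall fun x => ?_)
  simp only [Pi.sub_apply, Real.norm_eq_abs, sq_abs]
  ring

/-- The residual tested with `(u - c) τ`, where `u` may be replaced by its edge projection in the
terms containing discrete fields. -/
theorem ipBdry_residual {k : ℕ} {γ : ℝ} {u c a : Pt → ℝ}
    (hu : ∀ e ∈ M.bdryEdges, MemLp u 2 (edgeMeasure e)) (hc : c ∈ M.Ctrl k)
    (ha : ∀ e ∈ M.bdryEdges, MemLp a 2 (edgeMeasure e))
    {T : BrokenTen} (hT : T ∈ M.Sig k) (z : BrokenVec) :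
    M.ipBdry (M.residual (k - 1) γ a T z) (M.tang (u - c))
      = γ * ∑ e ∈ M.bdryEdges, ∫ x, a x * (u - c) x ∂edgeMeasure e
        - (M.ipBdry (M.tangProj (k - 1) u) (M.bdryFlux T)
            - M.ipBdry (M.tang c) (M.bdryFlux T))
        + (M.ipBdry (M.etaMul (M.tangProj (k - 1) u)) (M.bdryTrace z)
            - M.ipBdry (M.etaMul (M.tang c)) (M.bdryTrace z)) := by
  simp only [ipBdry, Finset.mul_sum, ← Finset.sum_sub_distrib, ← Finset.sum_add_distrib]
  refine Finset.sum_congr rfl fun e he => ?_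
  have he2 := (M.mem_bdryEdges.1 he).1.2
  set t := M.tau e with ht
  set F : Pt → ℝ := fun x => inner ℝ (M.bdryFlux T e x) t with hF
  set Z : Pt → ℝ := fun x => inner ℝ (M.bdryTrace z e x) t with hZ
  set P : Pt → ℝ := fun x => inner ℝ (bdryProj (k - 1) (M.bdryTrace z) e x) t with hP
  set η := M.bdryEta e
  have huL := hu e he
  have hcL := M.memLp_of_mem_Ctrl hc he
  have haL := ha e he
  have hFp : F ∈ polyFun (k - 1) :=
    inner_mulNormalAt_mem_polyFun (hT _ (M.bdryTriangle_spec he).1) _ _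
  have hPp : P ∈ polyFun (k - 1) := inner_edgeProjVec_mem_polyFun he2 _ _
  have hFL := memLp_of_mem_polyFun he2 hFp
  have hPL := memLp_of_mem_polyFun he2 hPp
  have hdL := huL.sub hcL
  have hres : ∀ x, inner ℝ (M.residual (k - 1) γ a T z e x) (M.tang (u - c) e x)
      = γ * (a x * (u - c) x) - (u x * F x - c x * F x) + η * (u x * P x - c x * P x) := by
    intro x
    have htt : inner ℝ t t = (1 : ℝ) := by
      rw [real_inner_self_eq_norm_sq, M.norm_tau he, one_pow]
    simp only [residual, Pi.add_apply, Pi.sub_apply, Pi.smul_apply, tang, etaMul, ← ht,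
      inner_add_left, inner_sub_left, real_inner_smul_left, real_inner_smul_right, htt, hF, hP]
    ring
  have huF : ∫ x, u x * F x ∂edgeMeasure e = ∫ x, edgeProj (k - 1) e u x * F x ∂edgeMeasure e :=
    (integral_edgeProj_mul he2 huL hFp).symm
  have huP : ∫ x, u x * P x ∂edgeMeasure e = ∫ x, edgeProj (k - 1) e u x * Z x ∂edgeMeasure e := by
    rw [← integral_edgeProj_mul he2 huL hPp]
    exact integral_mul_inner_edgeProjVec he2 _ _ (edgeProj_mem_polyFun he2 huL)
  have hcP : ∫ x, c x * P x ∂edgeMeasure e = ∫ x, c x * Z x ∂edgeMeasure e := by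
    obtain ⟨p, hp, hcp⟩ := hc e he
    have hcongr : ∀ R : Pt → ℝ, ∫ x, c x * R x ∂edgeMeasure e
        = ∫ x, evalAt p x * R x ∂edgeMeasure e := fun R =>
      integral_congr_ae (hcp.mono fun x hx => by simp only [hx])
    rw [hcongr, hcongr]
    exact integral_mul_inner_edgeProjVec he2 _ _ (evalAt_mem_polyFun hp)
  have iaD := haL.integrable_mul hdL
  have iuF := huL.integrable_mul hFL
  have icF := hcL.integrable_mul hFL
  have iuP := huL.integrable_mul hPL
  have icP := hcL.integrable_mul hPL
  have hsplit : ∫ x, inner ℝ (M.residual (k - 1) γ a T z e x) (M.tang (u - c) e x) ∂edgeMeasure e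
      = γ * ∫ x, a x * (u - c) x ∂edgeMeasure e
        - (∫ x, u x * F x ∂edgeMeasure e - ∫ x, c x * F x ∂edgeMeasure e)
        + η * (∫ x, u x * P x ∂edgeMeasure e - ∫ x, c x * P x ∂edgeMeasure e) := by
    simp_rw [hres]
    rw [integral_add (by exact (iaD.const_mul γ).sub (iuF.sub icF))
        (by exact (iuP.sub icP).const_mul η),
      integral_sub (by exact iaD.const_mul γ) (by exact iuF.sub icF),
      integral_sub (by exact iuF) (by exact icF), integral_const_mul, integral_const_mul,
      integral_sub (by exact iuP) (by exact icP)]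
  rw [hsplit, huF, huP, hcP, mul_sub, ← integral_const_mul, ← integral_const_mul η,
    ← integral_const_mul η]
  simp only [tangProj, tang, etaMul, ← ht, real_inner_smul_left, hF, hZ]
  simp only [real_inner_comm]
  rfl

end Triangulation

end HDGControl

end

/-- Error identity for the HDG discretization of the tangential Dirichlet boundary control
problem for the Stokes system. Here `(Lh, …, wh, uh)` solves the discrete optimality system,
`(Lhu, yhu, yhatu, phu)` and `(Thu, zhu, zhatu, whu)` solve the auxiliary discrete state and adjoint
problems with the control `u ∈ L²(Γ)`, and `ζ_y = yhu - yh`. -/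
theorem control_error_identity
    (Ω : Set HDGControl.Pt) (hΩ : HDGControl.IsPolygonalDomain Ω)
    (M : HDGControl.Triangulation Ω) (k : ℕ) (hk : 1 ≤ k) (γ : ℝ) (hγ : 0 < γ)
    (f yd : HDGControl.Pt → HDGControl.Pt)
    (hf : MemLp f 2 (volume.restrict Ω)) (hyd : MemLp yd 2 (volume.restrict Ω))
    (u : HDGControl.Pt → ℝ)
    (hu : MemLp u 2 ((Measure.hausdorffMeasure 1).restrict (frontier Ω)))
    (Lh : HDGControl.BrokenTen) (yh : HDGControl.BrokenVec)
    (yhath : HDGControl.Pt → HDGControl.Pt) (ph : HDGControl.BrokenScal)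
    (Th : HDGControl.BrokenTen) (zh : HDGControl.BrokenVec)
    (zhath : HDGControl.Pt → HDGControl.Pt) (wh : HDGControl.BrokenScal)
    (uh : HDGControl.Pt → ℝ)
    (hopt : M.IsDiscreteOptimal k γ f yd Lh yh yhath ph Th zh zhath wh uh)
    (Lhu : HDGControl.BrokenTen) (yhu : HDGControl.BrokenVec)
    (yhatu : HDGControl.Pt → HDGControl.Pt) (phu : HDGControl.BrokenScal)
    (hstate : M.IsState k f (M.tangProj (k - 1) u) Lhu yhu yhatu phu)
    (Thu : HDGControl.BrokenTen) (zhu : HDGControl.BrokenVec)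
    (zhatu : HDGControl.Pt → HDGControl.Pt) (whu : HDGControl.BrokenScal)
    (hadj : M.IsAdjoint k yhu yd Thu zhu zhatu whu) :
    γ * M.normBdry (u - uh) ^ 2 + M.normVec (yhu - yh) ^ 2
      = M.ipBdry (M.residual (k - 1) γ u Thu zhu) (M.tang (u - uh))
        - M.ipBdry (M.residual (k - 1) γ uh Th zh) (M.tang (u - uh)) := by
  have hu' := fun e he => M.memLp_of_memLp_frontier hu (e := e) he
  have huh := fun e he => M.memLp_of_mem_Ctrl hopt.memU (e := e) he
  rw [M.normBdry_sub_sq hu' huh, M.normVec_sub_sq hΩ hyd,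
    M.ipBdry_residual hu' hopt.memU hu' hadj.memT,
    M.ipBdry_residual hu' hopt.memU huh hopt.adjoint.memT,
    hstate.duality hadj, hopt.state.duality hadj, hstate.duality hopt.adjoint,
    hopt.state.duality hopt.adjoint]
  ring
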